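/- arXiv:1305.3711 — 3 statements merged into one kernel-verified Lean document; each statement's English description precedes it below -/
import Mathlib

section
/- For every n ∈ ℕ, the Fisher information of the Rakhmanov density of the orthonormal Laguerre polynomial with parameter α = 0 equals F[ρ_{n,0}] = 4n + 1; equivalently, the Fisher length is (δx)_{n,0} = 1/√(4n+1). -/
open MeasureTheory Real

/-- The generalized Laguerre polynomial `L_n^{(α)}`. -/
noncomputable def laguerreL (α : ℝ) (n : ℕ) (x : ℝ) : ℝ :=
  ∑ k ∈ Finset.range (n + 1),
    (-1) ^ k * Real.Gamma ((n : ℝ) + α + 1) /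
      (Real.Gamma ((k : ℝ) + α + 1) * ((n - k).factorial : ℝ) * (k.factorial : ℝ)) * x ^ k

/-- The Rakhmanov density of the orthonormal Laguerre polynomial
`p_n^{(α)}(x) = (n!/Γ(n+α+1))^{1/2} L_n^{(α)}(x)`, i.e.
`ρ_{n,α}(x) = p_n^{(α)}(x)^2 x^α e^{-x}`. -/
noncomputable def laguerreρ (α : ℝ) (n : ℕ) (x : ℝ) : ℝ :=
  ((n.factorial : ℝ) / Real.Gamma ((n : ℝ) + α + 1)) * (laguerreL α n x) ^ 2 *
    x ^ α * Real.exp (-x)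

/-!
For a density `u²` the Fisher information is `4 ∫ u'²`. With `u(x) = p(x) e^{-x/2}` and
`Λ p = ∫₀^∞ p(x) e^{-x} dx`, integration by parts removes the cross term and gives
`4 Λ(p'²) - Λ(p²) + 2 p(0)²`. For the Laguerre polynomial `L_n` we have `L_n(0) = 1`, and the
recurrence `L_{n+1}' = L_n' - L_n` combined with integration by parts gives, by induction on `n`,
`Λ(L_n L_n') = 0`, hence `Λ(L_n²) = 1` and `Λ(L_n'²) = n`.
-/

open Polynomial Set

/-- The Fisher information `F[ρ] = ∫_Δ (ρ')² / ρ` of a density `ρ` on `Δ ⊆ ℝ`. It takes the junk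
value `0` when the integrand is not integrable on `Δ`. -/
noncomputable def fisherInformation (Δ : Set ℝ) (ρ : ℝ → ℝ) : ℝ :=
  ∫ x in Δ, deriv ρ x ^ 2 / ρ x

lemma fisherInformation_sq {Δ : Set ℝ} {u u' : ℝ → ℝ}
    (hu : ∀ᵐ x ∂volume.restrict Δ, HasDerivAt u (u' x) x)
    (hu₀ : ∀ᵐ x ∂volume.restrict Δ, u x ≠ 0) :
    fisherInformation Δ (fun x ↦ u x ^ 2) = 4 * ∫ x in Δ, u' x ^ 2 := by
  rw [fisherInformation, ← integral_const_mul]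
  refine integral_congr_ae ?_
  filter_upwards [hu, hu₀] with x hx hx₀
  have hderiv : deriv (fun y ↦ u y ^ 2) x = 2 * u x * u' x := by
    simpa using (hx.fun_pow 2).deriv
  rw [hderiv]
  field_simp
  ring

lemma ae_eval_ne_zero {R : Type*} [CommRing R] [IsDomain R] [MeasurableSpace R] (μ : Measure R)
    [NullSingletonClass μ] {p : R[X]} (hp : p ≠ 0) : ∀ᵐ x ∂μ, p.eval x ≠ 0 :=
  (finite_setOfPred_isRoot hp).countable.ae_notMem μ

lemma integrableOn_eval_mul_exp_neg (p : ℝ[X]) (a : ℝ) :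
    IntegrableOn (fun x ↦ p.eval x * exp (-x)) (Ioi a) := by
  refine integrable_of_isBigO_exp_neg one_half_pos (by fun_prop) (Asymptotics.IsLittleO.isBigO ?_)
  induction p using Polynomial.induction_on' with
  | add p q hp hq => simpa only [eval_add, add_mul] using hp.add hq
  | monomial k c =>
    have hpow := (isLittleO_pow_exp_pos_mul_atTop k (one_half_pos (α := ℝ))).const_mul_left c
    refine (hpow.mul_isBigO (Asymptotics.isBigO_refl (fun x ↦ exp (-x)) _)).congr (fun x ↦ ?_)
      fun x ↦ ?_
    · rw [eval_monomial]
    · rw [← exp_add]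
      ring_nf

/-- The moment functional `p ↦ ∫₀^∞ p(x) e^{-x} dx` of the Laguerre weight with parameter `0`. -/
noncomputable def laguerreFunctional : ℝ[X] →ₗ[ℝ] ℝ where
  toFun p := ∫ x in Ioi (0 : ℝ), p.eval x * exp (-x)
  map_add' p q := by
    simp only [eval_add, add_mul]
    exact integral_add (integrableOn_eval_mul_exp_neg p 0) (integrableOn_eval_mul_exp_neg q 0)
  map_smul' c p := by
    simp only [eval_smul, smul_eq_mul, mul_assoc, integral_const_mul, RingHom.id_apply]

lemma laguerreFunctional_apply (p : ℝ[X]) :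
    laguerreFunctional p = ∫ x in Ioi (0 : ℝ), p.eval x * exp (-x) :=
  rfl

lemma laguerreFunctional_derivative_sub_self (p : ℝ[X]) :
    laguerreFunctional (derivative p - p) = -p.eval 0 := by
  have hderiv (x : ℝ) : HasDerivAt (fun y ↦ p.eval y * exp (-y))
      ((derivative p - p).eval x * exp (-x)) x :=
    ((p.hasDerivAt x).mul (hasDerivAt_neg x).exp).congr_deriv (by rw [eval_sub]; ring)
  have hlim : Filter.Tendsto (fun x ↦ p.eval x * exp (-x)) Filter.atTop (nhds 0) := by
    simpa only [exp_neg, div_eq_mul_inv] using p.tendsto_div_exp_atTop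
  rw [laguerreFunctional_apply, integral_Ioi_of_hasDerivAt_of_tendsto' (fun x _ ↦ hderiv x)
    (integrableOn_eval_mul_exp_neg _ 0) hlim]
  simp

lemma laguerreFunctional_mul_derivative_sub_self (p q : ℝ[X]) :
    laguerreFunctional (p * (derivative q - q)) =
      -(laguerreFunctional (derivative p * q) + p.eval 0 * q.eval 0) := by
  have hparts := laguerreFunctional_derivative_sub_self (p * q)
  have hsplit : derivative (p * q) - p * q = derivative p * q + p * (derivative q - q) := by
    rw [derivative_mul]; ring
  rw [hsplit, map_add, eval_mul] at hparts
  linarith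

lemma two_mul_laguerreFunctional_mul_derivative (p : ℝ[X]) :
    2 * laguerreFunctional (p * derivative p) = laguerreFunctional (p ^ 2) - p.eval 0 ^ 2 := by
  have hparts := laguerreFunctional_mul_derivative_sub_self p p
  rw [mul_sub, map_sub, mul_comm (derivative p), ← sq, ← sq] at hparts
  linarith

lemma fisherInformation_sq_eval_mul_exp_neg_half {p : ℝ[X]} (hp : p ≠ 0) :
    fisherInformation (Ioi 0) (fun x ↦ (p.eval x * exp (-x / 2)) ^ 2) =
      4 * laguerreFunctional (derivative p ^ 2) - laguerreFunctional (p ^ 2) +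
        2 * p.eval 0 ^ 2 := by
  have hderiv (x : ℝ) : HasDerivAt (fun y ↦ p.eval y * exp (-y / 2))
      ((2 * derivative p - p).eval x / 2 * exp (-x / 2)) x := by
    refine ((p.hasDerivAt x).mul ((hasDerivAt_neg x).div_const 2).exp).congr_deriv ?_
    rw [eval_sub, eval_mul, eval_ofNat]
    ring
  have hne : ∀ᵐ x : ℝ, p.eval x * exp (-x / 2) ≠ 0 :=
    (ae_eval_ne_zero volume hp).mono fun x hx ↦ mul_ne_zero hx (exp_ne_zero _)
  have hsquare : (2 * derivative p - p) ^ 2 =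
      4 • derivative p ^ 2 - 4 • (p * derivative p) + p ^ 2 := by
    ring
  calc
    _ = laguerreFunctional ((2 * derivative p - p) ^ 2) := by
      rw [fisherInformation_sq (.of_forall hderiv) (ae_restrict_of_ae hne),
        ← integral_const_mul, laguerreFunctional_apply]
      congr with x
      rw [mul_pow, ← exp_nat_mul, eval_pow]
      ring_nf
    _ = _ := by
      rw [hsquare, map_add, map_sub, map_nsmul, map_nsmul, nsmul_eq_mul, nsmul_eq_mul]
      push_cast
      linarith [two_mul_laguerreFunctional_mul_derivative p]

section LaguerrePoly

variable (K : Type*) [Field K]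

/-- The Laguerre polynomial `L_n = L_n^{(0)}` with coefficients in `K`, of which `laguerreL 0 n` is
the function on `ℝ`. In characteristic `p > 0` the coefficients of `X ^ k`, `k ≥ p`, take the junk
value `0`. -/
noncomputable def laguerrePoly (n : ℕ) : K[X] :=
  ∑ k ∈ Finset.range (n + 1), monomial k ((-1) ^ k * (n.choose k : K) / (k.factorial : K))

lemma coeff_laguerrePoly (n k : ℕ) :
    (laguerrePoly K n).coeff k = (-1) ^ k * (n.choose k : K) / (k.factorial : K) := by
  simp only [laguerrePoly, finsetSum_coeff, coeff_monomial, Finset.sum_ite_eq', Finset.mem_range]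
  split_ifs with hk
  · rfl
  · rw [Nat.choose_eq_zero_of_lt (by lia), Nat.cast_zero, mul_zero, zero_div]

lemma laguerrePoly_zero : laguerrePoly K 0 = 1 := by
  simp [laguerrePoly]

lemma eval_zero_laguerrePoly (n : ℕ) : (laguerrePoly K n).eval 0 = 1 := by
  simp [← coeff_zero_eq_eval_zero, coeff_laguerrePoly]

lemma laguerrePoly_ne_zero (n : ℕ) : laguerrePoly K n ≠ 0 := by
  intro h
  simpa [h] using eval_zero_laguerrePoly K n

lemma derivative_laguerrePoly_succ [CharZero K] (n : ℕ) :
    derivative (laguerrePoly K (n + 1)) = derivative (laguerrePoly K n) - laguerrePoly K n := by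
  ext k
  simp only [coeff_derivative, coeff_sub, coeff_laguerrePoly, Nat.choose_succ_succ,
    Nat.factorial_succ]
  have hfact : (k.factorial : K) ≠ 0 := mod_cast k.factorial_ne_zero
  have hsucc : (k : K) + 1 ≠ 0 := k.cast_add_one_ne_zero
  push_cast
  field_simp
  ring

end LaguerrePoly

lemma laguerreFunctional_laguerrePoly_mul_derivative (n : ℕ) :
    laguerreFunctional (laguerrePoly ℝ n * derivative (laguerrePoly ℝ n)) = 0 := by
  induction n with
  | zero => simp [laguerrePoly_zero]
  | succ n ih =>
    have hnorm := two_mul_laguerreFunctional_mul_derivative (laguerrePoly ℝ n)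
    rw [ih, eval_zero_laguerrePoly] at hnorm
    calc
      _ = -(laguerreFunctional (derivative (laguerrePoly ℝ (n + 1)) * laguerrePoly ℝ n) + 1) := by
        rw [derivative_laguerrePoly_succ, laguerreFunctional_mul_derivative_sub_self,
          eval_zero_laguerrePoly, eval_zero_laguerrePoly, mul_one, derivative_laguerrePoly_succ]
      _ = laguerreFunctional (laguerrePoly ℝ n ^ 2) - 1 := by
        rw [derivative_laguerrePoly_succ, sub_mul, map_sub, mul_comm, ih, ← sq]
        ring
      _ = 0 := by linarith

lemma laguerreFunctional_laguerrePoly_sq (n : ℕ) :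
    laguerreFunctional (laguerrePoly ℝ n ^ 2) = 1 := by
  have hparts := two_mul_laguerreFunctional_mul_derivative (laguerrePoly ℝ n)
  rw [laguerreFunctional_laguerrePoly_mul_derivative, eval_zero_laguerrePoly] at hparts
  linarith

lemma laguerreFunctional_derivative_laguerrePoly_sq (n : ℕ) :
    laguerreFunctional (derivative (laguerrePoly ℝ n) ^ 2) = n := by
  induction n with
  | zero => simp [laguerrePoly_zero]
  | succ n ih =>
    have hsquare : derivative (laguerrePoly ℝ (n + 1)) ^ 2 =
        derivative (laguerrePoly ℝ n) ^ 2 -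
          2 • (laguerrePoly ℝ n * derivative (laguerrePoly ℝ n)) + laguerrePoly ℝ n ^ 2 := by
      rw [derivative_laguerrePoly_succ]
      ring
    rw [hsquare, map_add, map_sub, map_nsmul, ih, laguerreFunctional_laguerrePoly_mul_derivative,
      laguerreFunctional_laguerrePoly_sq, smul_zero, sub_zero, Nat.cast_succ]

lemma laguerreL_zero_eq_eval (n : ℕ) (x : ℝ) : laguerreL 0 n x = (laguerrePoly ℝ n).eval x := by
  rw [laguerreL, laguerrePoly, eval_finsetSum]
  refine Finset.sum_congr rfl fun k hk ↦ ?_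
  have hkn : k ≤ n := Nat.lt_succ_iff.mp (Finset.mem_range.mp hk)
  rw [eval_monomial, add_zero, add_zero, Gamma_nat_eq_factorial, Gamma_nat_eq_factorial,
    Nat.cast_choose ℝ hkn]
  field_simp

lemma laguerreρ_zero_eq_sq (n : ℕ) :
    laguerreρ 0 n = fun x ↦ ((laguerrePoly ℝ n).eval x * exp (-x / 2)) ^ 2 := by
  ext x
  have hfact : (n.factorial : ℝ) ≠ 0 := mod_cast n.factorial_ne_zero
  rw [laguerreρ, laguerreL_zero_eq_eval, add_zero, Gamma_nat_eq_factorial, div_self hfact,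
    rpow_zero, one_mul, mul_one, mul_pow, ← exp_nat_mul]
  congr 2
  push_cast
  ring

lemma fisherInformation_laguerreρ_zero (n : ℕ) :
    fisherInformation (Ioi 0) (laguerreρ 0 n) = 4 * n + 1 := by
  rw [laguerreρ_zero_eq_sq, fisherInformation_sq_eval_mul_exp_neg_half (laguerrePoly_ne_zero ℝ n),
    laguerreFunctional_derivative_laguerrePoly_sq, laguerreFunctional_laguerrePoly_sq,
    eval_zero_laguerrePoly]
  ring

/-- For every `n ∈ ℕ`, the Fisher information of the Rakhmanov density of
the orthonormal Laguerre polynomial with `α = 0` equals `4n + 1`; equivalently, the Fisher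
length is `1/√(4n+1)`. -/
theorem laguerre_fisher_alpha_zero (n : ℕ) :
    (∫ x in Set.Ioi (0 : ℝ), (deriv (laguerreρ 0 n) x) ^ 2 / laguerreρ 0 n x) =
      4 * (n : ℝ) + 1 ∧
    (∫ x in Set.Ioi (0 : ℝ), (deriv (laguerreρ 0 n) x) ^ 2 / laguerreρ 0 n x) ^
        (-(1 / 2) : ℝ) = 1 / Real.sqrt (4 * (n : ℝ) + 1) := by
  have hfisher : (∫ x in Set.Ioi (0 : ℝ), (deriv (laguerreρ 0 n) x) ^ 2 / laguerreρ 0 n x) =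
      4 * (n : ℝ) + 1 := fisherInformation_laguerreρ_zero n
  refine ⟨hfisher, ?_⟩
  rw [hfisher, rpow_neg (by positivity), ← sqrt_eq_rpow, one_div]
end

section
/- For every n ∈ ℕ, the Fisher information of the Rakhmanov density of the orthonormal Jacobi polynomial with parameters α = β = 0 (the orthonormal Legendre case) equals F[ρ_{n,0,0}] = 2n(n+1)(2n+1). -/
open MeasureTheory Real

/-- The Jacobi polynomial `P_n^{(α,β)}`. -/
noncomputable def jacobiP (α β : ℝ) (n : ℕ) (x : ℝ) : ℝ :=
  ∑ s ∈ Finset.range (n + 1),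
    (Real.Gamma ((n : ℝ) + α + 1) / (Real.Gamma (α + (s : ℝ) + 1) * ((n - s).factorial : ℝ))) *
    (Real.Gamma ((n : ℝ) + β + 1) / (Real.Gamma ((n : ℝ) + β - (s : ℝ) + 1) * (s.factorial : ℝ))) *
    ((x - 1) / 2) ^ s * ((x + 1) / 2) ^ (n - s)

/-- The normalization constant `h_n` of the Jacobi polynomials. -/
noncomputable def jacobih (α β : ℝ) (n : ℕ) : ℝ :=
  2 ^ (α + β + 1) * Real.Gamma ((n : ℝ) + α + 1) * Real.Gamma ((n : ℝ) + β + 1) /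
    ((2 * (n : ℝ) + α + β + 1) * (n.factorial : ℝ) * Real.Gamma ((n : ℝ) + α + β + 1))

/-- The Rakhmanov density of the orthonormal Jacobi polynomial
`p_n^{(α,β)}(x) = h_n^{-1/2} P_n^{(α,β)}(x)`, i.e.
`ρ_{n,α,β}(x) = p_n^{(α,β)}(x)^2 (1-x)^α (1+x)^β`. -/
noncomputable def jacobiρ (α β : ℝ) (n : ℕ) (x : ℝ) : ℝ :=
  (jacobiP α β n x) ^ 2 / jacobih α β n * (1 - x) ^ α * (1 + x) ^ β

/-! The Rakhmanov density with `α = β = 0` is `c ψ ^ 2`, where `c = (2n + 1) / 2` and `ψ` is the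
Legendre polynomial `P_n`, so its Fisher information is `4 c ∫ ψ' ^ 2`. Integrating by parts,
`∫ ψ' ^ 2` is the boundary value of `ψ' ψ` minus `∫ ψ'' ψ`, and the last integral vanishes because
`ψ` is orthogonal to all polynomials of lower degree. Substituting `y = (1 - x) / 2` carries
everything to the shifted Legendre polynomials on `[0, 1]`, whose orthogonality comes from the
Rodrigues formula and whose boundary values come from the two lowest coefficients and the symmetry
under `y ↦ 1 - y`. -/

open Polynomial

section FisherInformation

/-- The Fisher information of a density `ρ` on the set `s`. Points where `ρ` vanishes do not
contribute, since there the integrand has the value `_ / 0 = 0`. -/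
noncomputable def fisherInfo (ρ : ℝ → ℝ) (s : Set ℝ) : ℝ :=
  ∫ x in s, deriv ρ x ^ 2 / ρ x

lemma fisherInfo_const_mul (c : ℝ) (ρ : ℝ → ℝ) (s : Set ℝ) :
    fisherInfo (fun x => c * ρ x) s = c * fisherInfo ρ s := by
  simp only [fisherInfo, deriv_const_mul_field]
  rw [← integral_const_mul]
  congr with x
  rcases eq_or_ne c 0 with rfl | hc
  · simp
  · field_simp

lemma countable_setOf_eq_and_deriv_ne_zero {E : Type*} [NormedAddCommGroup E] [NormedSpace ℝ E]
    (f : ℝ → E) (c : E) : {x | f x = c ∧ deriv f x ≠ 0}.Countable := by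
  -- At such a point `f` avoids `c` in a punctured neighbourhood, so these points are isolated.
  refine (HereditarilyLindelofSpace.isLindelof _).countable_of_isDiscrete
    (isDiscrete_iff_nhdsNE.2 fun x hx => ?_)
  have hne : ∀ᶠ z in nhdsWithin x {x}ᶜ, f z ≠ c :=
    (differentiableAt_of_deriv_ne_zero hx.2).hasDerivAt.eventually_ne hx.2
  rw [← disjoint_iff, Filter.disjoint_principal_right]
  filter_upwards [hne] with z hz hzc using hz hzc.1

lemma fisherInfo_sq {ψ : ℝ → ℝ} (hψ : Differentiable ℝ ψ) (s : Set ℝ) :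
    fisherInfo (fun x => ψ x ^ 2) s = 4 * ∫ x in s, deriv ψ x ^ 2 := by
  rw [fisherInfo, ← integral_const_mul]
  refine integral_congr_ae (ae_restrict_of_ae ?_)
  filter_upwards [(countable_setOf_eq_and_deriv_ne_zero ψ 0).ae_notMem volume] with x hx
  have hderiv : deriv (fun x => ψ x ^ 2) x = 2 * ψ x * deriv ψ x := by
    simp [deriv_fun_pow (hψ x) 2]
  rw [hderiv]
  rcases eq_or_ne (ψ x) 0 with h0 | h0
  · have hψ' : deriv ψ x = 0 := by_contra fun h => hx ⟨h0, h⟩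
    simp [hψ']
  · field_simp
    ring

end FisherInformation

section IntegrationByParts

lemma integral_eval_mul_eval_derivative (p q : ℝ[X]) (a b : ℝ) :
    ∫ x in a..b, p.eval x * (derivative q).eval x =
      p.eval b * q.eval b - p.eval a * q.eval a -
        ∫ x in a..b, (derivative p).eval x * q.eval x :=
  intervalIntegral.integral_mul_deriv_eq_deriv_mul
    (u := fun x => p.eval x) (v := fun x => q.eval x)
    (fun x _ => p.hasDerivAt x) (fun x _ => q.hasDerivAt x)
    ((derivative p).continuous.intervalIntegrable _ _)
    ((derivative q).continuous.intervalIntegrable _ _)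

lemma integral_eval_mul_eval_iterate_derivative {a b : ℝ} (n : ℕ) (p : ℝ[X]) {w : ℝ[X]}
    (ha : (X - C a) ^ n ∣ w) (hb : (X - C b) ^ n ∣ w) :
    ∫ x in a..b, p.eval x * (derivative^[n] w).eval x =
      (-1) ^ n * ∫ x in a..b, (derivative^[n] p).eval x * w.eval x := by
  induction n generalizing w with
  | zero => simp
  | succ n ih =>
    have eval_eq_zero {c : ℝ} (hc : (X - C c) ^ (n + 1) ∣ w) : w.eval c = 0 :=
      dvd_iff_isRoot.1 ((dvd_pow_self (X - C c) n.succ_ne_zero).trans hc)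
    have dvd_derivative {c : ℝ} (hc : (X - C c) ^ (n + 1) ∣ w) : (X - C c) ^ n ∣ derivative w :=
      pow_sub_one_dvd_derivative_of_pow_dvd (n := n + 1) hc
    rw [Function.iterate_succ_apply, ih (dvd_derivative ha) (dvd_derivative hb),
      integral_eval_mul_eval_derivative, eval_eq_zero ha, eval_eq_zero hb,
      Function.iterate_succ_apply' _ n p, pow_succ]
    ring

end IntegrationByParts

section ShiftedLegendre

lemma shiftedLegendre_eq_sum_choose_sq (n : ℕ) :
    shiftedLegendre n =
      ∑ k ∈ Finset.range (n + 1), (n.choose k : ℤ[X]) ^ 2 * (-X) ^ k * (1 - X) ^ (n - k) := by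
  refine nat_mul_inj' ?_ n.factorial_ne_zero
  rw [factorial_mul_shiftedLegendre_eq, iterate_derivative_mul, Finset.mul_sum]
  refine Finset.sum_congr rfl fun k hk => ?_
  have hkn : k ≤ n := Finset.mem_range_succ_iff.1 hk
  have hone_sub : (1 - X : ℤ[X]) ^ n = (X ^ n).comp (1 - X) := by simp
  have hdesc : n.descFactorial (n - k) * n.descFactorial k = n.factorial * n.choose k := by
    rw [n.descFactorial_eq_factorial_mul_choose k, ← Nat.factorial_mul_descFactorial (n.sub_le k),
      Nat.sub_sub_self hkn]
    ring
  have hdesc' : (n.descFactorial (n - k) * n.descFactorial k : ℤ[X]) =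
      n.factorial * n.choose k := mod_cast hdesc
  rw [hone_sub, iterate_derivative_comp_one_sub_X, iterate_derivative_X_pow_eq_natCast_mul,
    iterate_derivative_X_pow_eq_natCast_mul, Nat.sub_sub_self hkn, neg_pow]
  simp only [nsmul_eq_mul, mul_comp, natCast_comp, X_pow_comp]
  linear_combination ((n.choose k : ℤ[X]) * X ^ k * (-1) ^ k * (1 - X) ^ (n - k)) * hdesc'

lemma eval_zero_shiftedLegendre (n : ℕ) : (shiftedLegendre n).eval 0 = 1 := by
  simp [← coeff_zero_eq_eval_zero, coeff_shiftedLegendre]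

lemma eval_zero_derivative_shiftedLegendre (n : ℕ) :
    (derivative (shiftedLegendre n)).eval 0 = -(n * (n + 1)) := by
  simp [← coeff_zero_eq_eval_zero, coeff_derivative, coeff_shiftedLegendre]

lemma eval_one_shiftedLegendre (n : ℕ) : (shiftedLegendre n).eval 1 = (-1) ^ n := by
  rw [← neg_one_pow_mul_shiftedLegendre_comp_one_sub_X_eq n]
  simp [eval_zero_shiftedLegendre]

lemma eval_one_derivative_shiftedLegendre (n : ℕ) :
    (derivative (shiftedLegendre n)).eval 1 = (-1) ^ n * (n * (n + 1)) := by
  have hsymm : derivative (shiftedLegendre n) =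
      (-1) ^ n * -(derivative (shiftedLegendre n)).comp (1 - X) := by
    conv_lhs => rw [← neg_one_pow_mul_shiftedLegendre_comp_one_sub_X_eq n]
    rw [← derivative_comp_one_sub_X, ← C_1, ← C_neg, ← C_pow, derivative_C_mul]
  rw [hsymm]
  simp [eval_zero_derivative_shiftedLegendre]

lemma factorial_mul_aeval_shiftedLegendre {R : Type*} [CommRing R] (n : ℕ) (x : R) :
    n.factorial * aeval x (shiftedLegendre n) =
      (derivative^[n] (X ^ n * (1 - X) ^ n : R[X])).eval x := by
  have h := congrArg (fun p : ℤ[X] => (p.map (algebraMap ℤ R)).eval x)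
    (factorial_mul_shiftedLegendre_eq n)
  simpa [← iterate_derivative_map, aeval_def, eval₂_eq_eval_map] using h

lemma integral_eval_mul_aeval_shiftedLegendre_eq_zero {n : ℕ} {p : ℝ[X]} (hp : p.degree < n) :
    ∫ x in (0 : ℝ)..1, p.eval x * aeval x (shiftedLegendre n) = 0 := by
  rcases eq_or_ne p 0 with rfl | hp0
  · simp
  have hzero : (X - C 0 : ℝ[X]) ^ n ∣ X ^ n * (1 - X) ^ n := by simp
  have hone : (X - C 1 : ℝ[X]) ^ n ∣ X ^ n * (1 - X) ^ n :=
    (pow_dvd_pow_of_dvd (by rw [← neg_sub, neg_dvd, C_1]) n).mul_left _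
  have h := integral_eval_mul_eval_iterate_derivative n p hzero hone
  rw [iterate_derivative_eq_zero ((natDegree_lt_iff_degree_lt hp0).2 hp)] at h
  simpa [← factorial_mul_aeval_shiftedLegendre, mul_left_comm, n.factorial_ne_zero] using h

lemma integral_aeval_derivative_shiftedLegendre_sq (n : ℕ) :
    ∫ x in (0 : ℝ)..1, aeval x (derivative (shiftedLegendre n)) ^ 2 = 2 * (n * (n + 1)) := by
  set q : ℝ[X] := (shiftedLegendre n).map (algebraMap ℤ ℝ) with hq
  have orth : ∫ x in (0 : ℝ)..1, (derivative (derivative q)).eval x * q.eval x = 0 := by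
    have hq_deg : q.degree = n := by
      rw [hq, degree_map_eq_of_injective (algebraMap ℤ ℝ).injective_int, degree_shiftedLegendre]
    have hq_ne : q ≠ 0 := by simp [← degree_eq_bot, hq_deg]
    have hdeg : (derivative (derivative q)).degree < n :=
      degree_derivative_le.trans_lt ((degree_derivative_lt hq_ne).trans_eq hq_deg)
    simpa only [hq, eval_map_algebraMap] using integral_eval_mul_aeval_shiftedLegendre_eq_zero hdeg
  calc ∫ x in (0 : ℝ)..1, aeval x (derivative (shiftedLegendre n)) ^ 2
      = ∫ x in (0 : ℝ)..1, (derivative q).eval x * (derivative q).eval x := by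
        simp only [hq, derivative_map, eval_map_algebraMap, sq]
    _ = (derivative q).eval 1 * q.eval 1 - (derivative q).eval 0 * q.eval 0 := by
        rw [integral_eval_mul_eval_derivative, orth, sub_zero]
    _ = ((-1) ^ n) ^ 2 * (n * (n + 1)) + n * (n + 1) := by
        simp only [hq, derivative_map, eval_one_map, eval_zero_map, eval_one_shiftedLegendre,
          eval_one_derivative_shiftedLegendre, eval_zero_shiftedLegendre,
          eval_zero_derivative_shiftedLegendre]
        push_cast
        ring
    _ = 2 * (n * (n + 1)) := by
        rw [← pow_mul, (even_two.mul_left n).neg_one_pow]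
        ring

end ShiftedLegendre

section Legendre

/-- The Legendre polynomial `P_n` as a function on `ℝ`, normalized by `P_n(1) = 1`. The argument of
the shifted polynomial is `(1 - x) / 2` and not `(1 + x) / 2` because `shiftedLegendre n` takes the
value `1` at `0`. -/
noncomputable def legendre (n : ℕ) (x : ℝ) : ℝ :=
  aeval ((1 - x) / 2) (shiftedLegendre n)

lemma hasDerivAt_legendre (n : ℕ) (x : ℝ) :
    HasDerivAt (legendre n) (-aeval ((1 - x) / 2) (derivative (shiftedLegendre n)) / 2) x := by
  have h := ((shiftedLegendre n).hasDerivAt_aeval ((1 - x) / 2)).comp x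
    (((hasDerivAt_id x).const_sub 1).div_const 2)
  exact h.congr_deriv (by ring)

lemma integral_deriv_legendre_sq (n : ℕ) :
    ∫ x in (-1 : ℝ)..1, deriv (legendre n) x ^ 2 = n * (n + 1) := by
  calc ∫ x in (-1 : ℝ)..1, deriv (legendre n) x ^ 2
      = ∫ x in (-1 : ℝ)..1,
          1 / 4 * aeval (1 / 2 - x / 2) (derivative (shiftedLegendre n)) ^ 2 := by
        congr with x
        rw [(hasDerivAt_legendre n x).deriv, sub_div]
        ring
    _ = 1 / 2 * ∫ y in (0 : ℝ)..1, aeval y (derivative (shiftedLegendre n)) ^ 2 := by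
        rw [intervalIntegral.integral_const_mul,
          intervalIntegral.integral_comp_sub_div
            (fun y => aeval y (derivative (shiftedLegendre n)) ^ 2) two_ne_zero, smul_eq_mul,
          ← mul_assoc]
        norm_num
    _ = n * (n + 1) := by
        rw [integral_aeval_derivative_shiftedLegendre_sq]
        ring

lemma jacobiP_zero_zero (n : ℕ) : jacobiP 0 0 n = legendre n := by
  ext x
  rw [jacobiP, legendre, shiftedLegendre_eq_sum_choose_sq, map_sum]
  refine Finset.sum_congr rfl fun k hk => ?_
  have hkn : k ≤ n := Finset.mem_range_succ_iff.1 hk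
  have hy : -((1 - x) / 2) = (x - 1) / 2 := by ring
  have hy' : 1 - (1 - x) / 2 = (x + 1) / 2 := by ring
  simp only [add_zero, zero_add, ← Nat.cast_sub hkn, Real.Gamma_nat_eq_factorial, map_mul, map_pow,
    map_neg, map_sub, map_one, map_natCast, aeval_X, hy, hy', Nat.cast_choose ℝ hkn]
  field_simp

lemma jacobih_zero_zero (n : ℕ) : jacobih 0 0 n = 2 / (2 * n + 1) := by
  have hfact : (n.factorial : ℝ) ≠ 0 := mod_cast n.factorial_ne_zero
  simp only [jacobih, add_zero, zero_add, Real.rpow_one, Real.Gamma_nat_eq_factorial]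
  field_simp

lemma jacobiρ_zero_zero (n : ℕ) :
    jacobiρ 0 0 n = fun x => (2 * n + 1) / 2 * legendre n x ^ 2 := by
  ext x
  rw [jacobiρ, jacobiP_zero_zero, jacobih_zero_zero, Real.rpow_zero, Real.rpow_zero]
  field_simp

end Legendre

/-- For every `n ∈ ℕ`, the Fisher information of the Rakhmanov density of
the orthonormal Jacobi polynomial with `α = β = 0` (the orthonormal Legendre case) equals
`2n(n+1)(2n+1)`. -/
theorem jacobi_fisher_legendre (n : ℕ) :
    (∫ x in Set.Ioo (-1 : ℝ) 1, (deriv (jacobiρ 0 0 n) x) ^ 2 / jacobiρ 0 0 n x) =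
      2 * (n : ℝ) * ((n : ℝ) + 1) * (2 * (n : ℝ) + 1) := by
  calc fisherInfo (jacobiρ 0 0 n) (Set.Ioo (-1) 1)
      = (2 * n + 1) / 2 * fisherInfo (fun x => legendre n x ^ 2) (Set.Ioo (-1) 1) := by
        rw [jacobiρ_zero_zero, fisherInfo_const_mul]
    _ = (2 * n + 1) / 2 * (4 * ∫ x in Set.Ioo (-1 : ℝ) 1, deriv (legendre n) x ^ 2) := by
        rw [fisherInfo_sq fun x => (hasDerivAt_legendre n x).differentiableAt]
    _ = (2 * n + 1) / 2 * (4 * (n * (n + 1))) := by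
        rw [← integral_Ioc_eq_integral_Ioo, ← intervalIntegral.integral_of_le (by norm_num),
          integral_deriv_legendre_sq]
    _ = 2 * n * (n + 1) * (2 * n + 1) := by ring
end

section
/- For every n ∈ ℕ and every k ∈ ℕ, the k-th moment of the Rakhmanov density of the orthonormal Hermite polynomial is ⟨x^k⟩_n = 0 when k is odd, and ⟨x^k⟩_n = ( k! / ( 2^k Γ(k/2 + 1) ) ) · Σ_{j=0}^{n} ( (−n)_j (−k/2)_j / (j!)² ) 2^j when k is even, where (a)_j denotes the Pochhammer symbol (the finite sum is the terminating hypergeometric series ₂F₁(−n, −k/2; 1; 2)). -/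
open MeasureTheory Real

/-- The physicists' Hermite polynomial `H_n`. -/
noncomputable def hermiteH : ℕ → ℝ → ℝ
  | 0, _ => 1
  | 1, x => 2 * x
  | (n + 2), x => 2 * x * hermiteH (n + 1) x - 2 * ((n : ℝ) + 1) * hermiteH n x

/-- The Rakhmanov density of the orthonormal Hermite polynomial
`p_n(x) = (2^n n! √π)^{-1/2} H_n(x)`, i.e. `ρ_n(x) = p_n(x)^2 e^{-x²}`. -/
noncomputable def hermiteρ (n : ℕ) (x : ℝ) : ℝ :=
  (hermiteH n x) ^ 2 * Real.exp (-x ^ 2) / (2 ^ n * (n.factorial : ℝ) * Real.sqrt π)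

/-- The Pochhammer symbol `(a)_j = a(a+1)⋯(a+j−1)`, with `(a)_0 = 1`. -/
noncomputable def poch (a : ℝ) (j : ℕ) : ℝ :=
  ∏ i ∈ Finset.range j, (a + (i : ℝ))

/-!
Write `μ_n(k)` for the `k`-th moment of `ρ_n`. Since `H_n' = 2x H_n - H_{n+1}` and
`H_{n+1}' = 2(n+1) H_n`, the cross terms cancel in the derivative of `H_{n+1}² + 2(n+1) H_n²`, so
integrating by parts `x^{k+1} (H_{n+1}² + 2(n+1) H_n²)` against `e^{-x²}` relates moments only:
`μ_{n+1}(k+2) = μ_n(k+2) + (k+1)/2 (μ_{n+1}(k) + μ_n(k))`. For the Gaussian itself,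
`μ_0(k+2) = (k+1)/2 μ_0(k)`; hence the ratios `μ_n(2m) / μ_0(2m)` obey the recurrence of the
Delannoy numbers `D(n, m) = ∑ j, C(n, j) C(m, j) 2^j`, and this sum is the terminating
hypergeometric series because `(-n)_j = (-1)^j j! C(n, j)`.
-/

section Hermite

open Polynomial

/-- The physicists' Hermite polynomials over a commutative ring, generated by the raising operator
`2X - d/dX`; Mathlib's `Polynomial.hermite` is the probabilists' family. -/
noncomputable def hermitePolynomial (R : Type*) [CommRing R] : ℕ → R[X]
  | 0 => 1
  | n + 1 => 2 * X * hermitePolynomial R n - derivative (hermitePolynomial R n)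

variable (R : Type*) [CommRing R]

theorem hermitePolynomial_zero : hermitePolynomial R 0 = 1 := rfl

theorem hermitePolynomial_succ (n : ℕ) :
    hermitePolynomial R (n + 1) =
      2 * X * hermitePolynomial R n - derivative (hermitePolynomial R n) := rfl

theorem derivative_hermitePolynomial (n : ℕ) :
    derivative (hermitePolynomial R n) =
      2 * X * hermitePolynomial R n - hermitePolynomial R (n + 1) := by
  rw [hermitePolynomial_succ, sub_sub_cancel]

theorem derivative_hermitePolynomial_succ (n : ℕ) :
    derivative (hermitePolynomial R (n + 1)) = (2 * (n + 1)) • hermitePolynomial R n := by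
  induction n with
  | zero => simp [hermitePolynomial]
  | succ n ih =>
    rw [hermitePolynomial_succ, derivative_sub, ih, derivative_smul,
      derivative_hermitePolynomial R n, derivative_mul, derivative_mul, ih]
    simp only [derivative_ofNat, derivative_X, nsmul_eq_mul]
    push_cast
    ring

theorem hermitePolynomial_add_two (n : ℕ) :
    hermitePolynomial R (n + 2) =
      2 * X * hermitePolynomial R (n + 1) - (2 * (n + 1)) • hermitePolynomial R n := by
  rw [hermitePolynomial_succ, derivative_hermitePolynomial_succ]

theorem derivative_hermitePolynomial_sq_add_sq (n : ℕ) :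
    derivative (hermitePolynomial R (n + 1) ^ 2 + (2 * (n + 1)) • hermitePolynomial R n ^ 2) =
      (8 * (n + 1)) • (X * hermitePolynomial R n ^ 2) := by
  rw [derivative_add, derivative_smul, derivative_sq, derivative_sq,
    derivative_hermitePolynomial_succ, derivative_hermitePolynomial]
  simp only [nsmul_eq_mul, C_ofNat]
  push_cast
  ring

theorem eval_hermitePolynomial (x : ℝ) : ∀ n, (hermitePolynomial ℝ n).eval x = hermiteH n x
  | 0 => by simp [hermitePolynomial, hermiteH]
  | 1 => by simp [hermitePolynomial, hermiteH]
  | n + 2 => by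
    simp [hermitePolynomial_add_two, hermiteH, eval_hermitePolynomial x (n + 1),
      eval_hermitePolynomial x n]

theorem hermiteH_neg (x : ℝ) : ∀ n, hermiteH n (-x) = (-1) ^ n * hermiteH n x
  | 0 => by simp [hermiteH]
  | 1 => by simp [hermiteH]
  | n + 2 => by
    simp only [hermiteH, hermiteH_neg x (n + 1), hermiteH_neg x n]
    ring

theorem even_hermiteρ (n : ℕ) : (hermiteρ n).Even := fun x ↦ by
  simp only [hermiteρ, hermiteH_neg, mul_pow, neg_sq, ← pow_mul, (even_two.mul_left n).neg_one_pow,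
    one_mul]

end Hermite

section GaussianIntegral

open Polynomial

theorem integrable_eval_mul_exp_neg_mul_sq {b : ℝ} (hb : 0 < b) (p : ℝ[X]) :
    Integrable fun x ↦ p.eval x * exp (-b * x ^ 2) := by
  induction p using Polynomial.induction_on' with
  | add p q hp hq =>
    simp only [eval_add, add_mul]
    exact hp.add hq
  | monomial n a =>
    have hn : (-1 : ℝ) < n := neg_one_lt_zero.trans_le n.cast_nonneg
    simpa only [eval_monomial, rpow_natCast, mul_assoc] using
      (integrable_rpow_mul_exp_neg_mul_sq hb hn).const_mul a

theorem integrable_eval_mul_exp_neg_sq (p : ℝ[X]) :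
    Integrable fun x ↦ p.eval x * exp (-x ^ 2) := by
  simpa only [neg_one_mul] using integrable_eval_mul_exp_neg_mul_sq one_pos p

/-- Integration of real polynomials against the Hermite weight `e^{-x²}`, as a linear functional. -/
noncomputable def gaussianIntegral : ℝ[X] →ₗ[ℝ] ℝ where
  toFun p := ∫ x, p.eval x * exp (-x ^ 2)
  map_add' p q := by
    simp only [eval_add, add_mul]
    exact integral_add (integrable_eval_mul_exp_neg_sq p) (integrable_eval_mul_exp_neg_sq q)
  map_smul' c p := by
    simp only [eval_smul, smul_eq_mul, mul_assoc, integral_const_mul, RingHom.id_apply]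

theorem gaussianIntegral_apply (p : ℝ[X]) :
    gaussianIntegral p = ∫ x, p.eval x * exp (-x ^ 2) := rfl

theorem gaussianIntegral_one : gaussianIntegral 1 = √π := by
  simpa [gaussianIntegral_apply] using integral_gaussian 1

theorem gaussianIntegral_derivative (p : ℝ[X]) :
    gaussianIntegral (derivative p) = 2 * gaussianIntegral (X * p) := by
  have h_deriv (x : ℝ) : HasDerivAt (fun x ↦ p.eval x * exp (-x ^ 2))
      ((derivative p - (2 : ℝ) • (X * p)).eval x * exp (-x ^ 2)) x := by
    refine ((p.hasDerivAt x).mul (hasDerivAt_pow 2 x).neg.exp).congr_deriv ?_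
    simp only [eval_sub, eval_smul, eval_mul, eval_X, smul_eq_mul, Pi.neg_apply]
    push_cast
    ring
  have h_zero : gaussianIntegral (derivative p - (2 : ℝ) • (X * p)) = 0 :=
    integral_eq_zero_of_hasDerivAt_of_integrable h_deriv
      (integrable_eval_mul_exp_neg_sq _) (integrable_eval_mul_exp_neg_sq p)
  rwa [map_sub, map_smul, smul_eq_mul, sub_eq_zero] at h_zero

theorem gaussianIntegral_X_pow_add_two (k : ℕ) :
    gaussianIntegral (X ^ (k + 2)) = (k + 1) / 2 * gaussianIntegral (X ^ k) := by
  have h := gaussianIntegral_derivative (X ^ (k + 1))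
  rw [derivative_X_pow_succ, ← pow_succ', ← smul_eq_C_mul, map_smul, smul_eq_mul] at h
  linarith

theorem gaussianIntegral_hermitePolynomial_succ_sq (n : ℕ) :
    gaussianIntegral (hermitePolynomial ℝ (n + 1) ^ 2) =
      2 * (n + 1) * gaussianIntegral (hermitePolynomial ℝ n ^ 2) := by
  have h := gaussianIntegral_derivative (hermitePolynomial ℝ n * hermitePolynomial ℝ (n + 1))
  have h_prod : derivative (hermitePolynomial ℝ n * hermitePolynomial ℝ (n + 1)) =
      (2 : ℝ) • (X * (hermitePolynomial ℝ n * hermitePolynomial ℝ (n + 1))) -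
        hermitePolynomial ℝ (n + 1) ^ 2 + (2 * (n + 1)) • hermitePolynomial ℝ n ^ 2 := by
    rw [derivative_mul, derivative_hermitePolynomial_succ, derivative_hermitePolynomial]
    simp only [nsmul_eq_mul, smul_eq_C_mul, C_ofNat]
    ring
  rw [h_prod, map_add, map_sub, map_smul, map_nsmul, smul_eq_mul, nsmul_eq_mul] at h
  push_cast at h
  linarith

theorem gaussianIntegral_X_pow_mul_hermitePolynomial_sq_recurrence (n k : ℕ) :
    gaussianIntegral (X ^ (k + 2) * hermitePolynomial ℝ (n + 1) ^ 2) =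
      2 * (n + 1) * gaussianIntegral (X ^ (k + 2) * hermitePolynomial ℝ n ^ 2) +
        (k + 1) / 2 * (gaussianIntegral (X ^ k * hermitePolynomial ℝ (n + 1) ^ 2) +
          2 * (n + 1) * gaussianIntegral (X ^ k * hermitePolynomial ℝ n ^ 2)) := by
  set P := hermitePolynomial ℝ (n + 1) ^ 2
  set Q := hermitePolynomial ℝ n ^ 2
  have h := gaussianIntegral_derivative (X ^ (k + 1) * (P + (2 * (n + 1)) • Q))
  have h_left : derivative (X ^ (k + 1) * (P + (2 * (n + 1)) • Q)) =
      (k + 1) • (X ^ k * P) + ((k + 1) * (2 * (n + 1))) • (X ^ k * Q) +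
        (8 * (n + 1)) • (X ^ (k + 2) * Q) := by
    rw [derivative_mul, derivative_hermitePolynomial_sq_add_sq, derivative_X_pow_succ]
    simp only [nsmul_eq_mul, map_add, map_natCast, map_one]
    push_cast
    ring
  have h_right : X * (X ^ (k + 1) * (P + (2 * (n + 1)) • Q)) =
      X ^ (k + 2) * P + (2 * (n + 1)) • (X ^ (k + 2) * Q) := by
    simp only [nsmul_eq_mul]
    ring
  rw [h_left, h_right] at h
  rw [map_add, map_add, map_add, map_nsmul, map_nsmul, map_nsmul, map_nsmul] at h
  simp only [nsmul_eq_mul] at h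
  push_cast at h
  linarith

end GaussianIntegral

section Delannoy

open Finset

/-- The Delannoy number `D(n, m)`, counting the lattice paths from `(0, 0)` to `(n, m)` with steps
`(1, 0)`, `(0, 1)` and `(1, 1)`; it is defined by a closed form instead of by its recurrence. -/
def delannoy (n m : ℕ) : ℕ :=
  ∑ j ∈ range (n + 1), n.choose j * m.choose j * 2 ^ j

theorem delannoy_zero_left (m : ℕ) : delannoy 0 m = 1 := by simp [delannoy]

theorem delannoy_zero_right (n : ℕ) : delannoy n 0 = 1 := by
  simp [delannoy, sum_range_succ']

theorem delannoy_eq_sum_range {n N : ℕ} (h : n < N) (m : ℕ) :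
    delannoy n m = ∑ j ∈ range N, n.choose j * m.choose j * 2 ^ j := by
  refine sum_subset (range_mono h) fun j _ hj ↦ ?_
  rw [Nat.choose_eq_zero_of_lt (by simpa using hj), zero_mul, zero_mul]

theorem delannoy_eq_one_add_sum {n N : ℕ} (h : n ≤ N) (m : ℕ) :
    delannoy n m =
      1 + ∑ j ∈ range N, n.choose (j + 1) * m.choose (j + 1) * 2 ^ (j + 1) := by
  rw [delannoy_eq_sum_range (Nat.lt_succ_of_le h), sum_range_succ', add_comm]
  simp only [Nat.choose_zero_right, pow_zero, mul_one]

theorem delannoy_succ_succ (n m : ℕ) :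
    delannoy (n + 1) (m + 1) = delannoy n (m + 1) + delannoy (n + 1) m + delannoy n m := by
  have h_diag : delannoy n m = ∑ j ∈ range (n + 1), n.choose j * m.choose j * 2 ^ j := rfl
  have h_diag_shift : delannoy n m =
      1 + ∑ j ∈ range (n + 1), n.choose (j + 1) * m.choose (j + 1) * 2 ^ (j + 1) :=
    delannoy_eq_one_add_sum n.le_succ m
  rw [delannoy_eq_one_add_sum (le_refl (n + 1)), delannoy_eq_one_add_sum n.le_succ,
    delannoy_eq_one_add_sum (le_refl (n + 1))]
  -- Expanded by Pascal's rule, the sums share the mixed products `C(n, j) C(m, j + 1)` and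
  -- `C(n, j + 1) C(m, j)`; the unmixed ones are accounted for by the two forms of `D(n, m)`.
  simp only [Nat.choose_succ_succ', add_mul, mul_add, sum_add_distrib, pow_succ, ← mul_assoc,
    ← sum_mul] at h_diag h_diag_shift ⊢
  lia

end Delannoy

section Pochhammer

theorem poch_eq_eval_ascPochhammer (a : ℝ) (j : ℕ) : poch a j = (ascPochhammer ℝ j).eval a := by
  induction j with
  | zero => simp [poch]
  | succ j ih => rw [poch, Finset.prod_range_succ, ← poch, ih, ascPochhammer_succ_eval]

theorem poch_neg_natCast (n j : ℕ) :
    poch (-(n : ℝ)) j = (-1) ^ j * (j.factorial * n.choose j) := by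
  rw [poch_eq_eval_ascPochhammer, ascPochhammer_eval_neg_eq_descPochhammer,
    descPochhammer_eval_eq_descFactorial, Nat.descFactorial_eq_factorial_mul_choose, Nat.cast_mul]

theorem sum_poch_neg_natCast_eq_delannoy (n m : ℕ) :
    ∑ j ∈ Finset.range (n + 1),
      poch (-(n : ℝ)) j * poch (-(m : ℝ)) j / (j.factorial : ℝ) ^ 2 * 2 ^ j =
        (delannoy n m : ℝ) := by
  rw [delannoy, Nat.cast_sum]
  refine Finset.sum_congr rfl fun j _ ↦ ?_
  have h_sign : ((-1 : ℝ) ^ j) ^ 2 = 1 := by rw [← pow_mul, (even_two.mul_left j).neg_one_pow]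
  have h_fact : (j.factorial : ℝ) ≠ 0 := mod_cast j.factorial_ne_zero
  rw [poch_neg_natCast, poch_neg_natCast]
  push_cast
  field_simp
  linear_combination (n.choose j * m.choose j : ℝ) * h_sign

end Pochhammer

section Moments

open Polynomial

theorem integral_eq_zero_of_odd {G E : Type*} [MeasurableSpace G] [AddGroup G]
    [MeasurableNeg G] [NormedAddCommGroup E] [NormedSpace ℝ E] (μ : Measure G) [μ.IsNegInvariant]
    {f : G → E} (hf : f.Odd) : ∫ x, f x ∂μ = 0 := by
  have : IsAddTorsionFree E := .of_isTorsionFree ℝ E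
  have h := integral_neg_eq_self f μ
  simp only [hf.eq, integral_neg] at h
  exact neg_eq_self.mp h

/-- The `k`-th moment `⟨x^k⟩_n` of the Rakhmanov density of the `n`-th Hermite polynomial. -/
noncomputable def rakhmanovMoment (n k : ℕ) : ℝ :=
  ∫ x, x ^ k * hermiteρ n x

theorem rakhmanovMoment_of_odd (n : ℕ) {k : ℕ} (hk : Odd k) : rakhmanovMoment n k = 0 :=
  have h_pow : Function.Odd fun x : ℝ ↦ x ^ k := hk.neg_pow
  integral_eq_zero_of_odd volume (h_pow.mul_even (even_hermiteρ n))

theorem rakhmanovMoment_eq_gaussianIntegral_div (n k : ℕ) :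
    rakhmanovMoment n k =
      gaussianIntegral (X ^ k * hermitePolynomial ℝ n ^ 2) / (2 ^ n * n.factorial * √π) := by
  rw [rakhmanovMoment, gaussianIntegral_apply, ← integral_div]
  simp only [hermiteρ, eval_mul, eval_pow, eval_X, eval_hermitePolynomial, mul_div_assoc, mul_assoc]

theorem rakhmanovMoment_zero_add_two (k : ℕ) :
    rakhmanovMoment 0 (k + 2) = (k + 1) / 2 * rakhmanovMoment 0 k := by
  simp only [rakhmanovMoment_eq_gaussianIntegral_div, hermitePolynomial_zero, one_pow, mul_one,
    gaussianIntegral_X_pow_add_two, mul_div_assoc]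

theorem rakhmanovMoment_zero_right (n : ℕ) : rakhmanovMoment n 0 = 1 := by
  simp only [rakhmanovMoment_eq_gaussianIntegral_div, pow_zero, one_mul]
  induction n with
  | zero => simp [hermitePolynomial_zero, gaussianIntegral_one, (sqrt_pos.mpr pi_pos).ne']
  | succ n ih =>
    rw [← ih, gaussianIntegral_hermitePolynomial_succ_sq, Nat.factorial_succ]
    push_cast
    field_simp
    ring

theorem rakhmanovMoment_succ_add_two (n k : ℕ) :
    rakhmanovMoment (n + 1) (k + 2) = rakhmanovMoment n (k + 2) +
      (k + 1) / 2 * (rakhmanovMoment (n + 1) k + rakhmanovMoment n k) := by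
  simp only [rakhmanovMoment_eq_gaussianIntegral_div,
    gaussianIntegral_X_pow_mul_hermitePolynomial_sq_recurrence n k, Nat.factorial_succ]
  push_cast
  field_simp
  ring

theorem rakhmanovMoment_zero_two_mul (m : ℕ) :
    rakhmanovMoment 0 (2 * m) = (2 * m).factorial / (2 ^ (2 * m) * m.factorial) := by
  induction m with
  | zero => simp [rakhmanovMoment_zero_right]
  | succ m ih =>
    rw [mul_add_one, rakhmanovMoment_zero_add_two, ih, Nat.factorial_succ (2 * m + 1),
      Nat.factorial_succ (2 * m), Nat.factorial_succ m]
    push_cast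
    field_simp
    ring

theorem rakhmanovMoment_two_mul (n m : ℕ) :
    rakhmanovMoment n (2 * m) = rakhmanovMoment 0 (2 * m) * delannoy n m := by
  induction n generalizing m with
  | zero => rw [delannoy_zero_left, Nat.cast_one, mul_one]
  | succ n ihn =>
    induction m with
    | zero => simp [rakhmanovMoment_zero_right, delannoy_zero_right]
    | succ m ihm =>
      have h_next := ihn (m + 1)
      rw [mul_add_one] at h_next ⊢
      rw [rakhmanovMoment_succ_add_two, h_next, ihm, ihn, delannoy_succ_succ,
        rakhmanovMoment_zero_add_two]
      push_cast
      ring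

end Moments

/-- For every `n, k ∈ ℕ`, the `k`-th moment of the Rakhmanov density of
the orthonormal Hermite polynomial vanishes for odd `k`, and for even `k` equals
`(k!/(2^k Γ(k/2+1))) · Σ_{j=0}^n ((−n)_j (−k/2)_j/(j!)²) 2^j`
(the terminating series `₂F₁(−n, −k/2; 1; 2)`). -/
theorem hermite_moments (n k : ℕ) :
    (Odd k → (∫ x : ℝ, x ^ k * hermiteρ n x) = 0) ∧
    (Even k → (∫ x : ℝ, x ^ k * hermiteρ n x) =
      (k.factorial : ℝ) / (2 ^ k * Real.Gamma ((k : ℝ) / 2 + 1)) *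
        ∑ j ∈ Finset.range (n + 1),
          poch (-(n : ℝ)) j * poch (-(k : ℝ) / 2) j / ((j.factorial : ℝ)) ^ 2 * 2 ^ j) := by
  refine ⟨rakhmanovMoment_of_odd n, fun hk ↦ ?_⟩
  obtain ⟨m, rfl⟩ := even_iff_exists_two_mul.mp hk
  have h_half : ((2 * m : ℕ) : ℝ) / 2 = m := by simp
  rw [neg_div, h_half, Gamma_nat_eq_factorial, sum_poch_neg_natCast_eq_delannoy,
    ← rakhmanovMoment_zero_two_mul]
  exact rakhmanovMoment_two_mul n m
end
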